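/- arXiv:2511.20802 — 2 statements merged into one kernel-verified Lean document; each statement's English description precedes it below -/
import Mathlib

section
/- Axiom (A1) for the matrix realization: for every slot index j ∈ {1,…,n}, the operation μ is additive in its j-th matrix argument, i.e. μ(A₁,…,A_{j-1}, A_j + A_j′, A_{j+1},…,Aₙ; γ₁,…,γ_{n-1}) = μ(A₁,…,A_j,…,Aₙ; γ₁,…,γ_{n-1}) + μ(A₁,…,A_j′,…,Aₙ; γ₁,…,γ_{n-1}); moreover, for every parameter index i ∈ {1,…,n-1}, μ is additive in γ_i: μ(A₁,…,Aₙ; γ₁,…,γ_i + γ_i′,…,γ_{n-1}) = μ(A₁,…,Aₙ; γ₁,…,γ_i,…,γ_{n-1}) + μ(A₁,…,Aₙ; γ₁,…,γ_i′,…,γ_{n-1}). -/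
open Matrix

/-- The matrix realization of the non-commutative `n`-ary Γ-semiring operation (here
`n = k + 2 ≥ 2`):
`μ(A₁,…,Aₙ; γ₁,…,γ_{n-1}) = (γ₁ • A₁) * A₂ * (γ₂ • A₃) * (γ₃ • A₄) * ⋯ * (γ_{n-1} • Aₙ)`,
i.e. the first factor is `γ₁ • A₁`, the second factor is `A₂`, and the subsequent factors
are `γᵢ • A_{i+1}` for `i = 2, …, n-1`. -/
def muMat {R : Type*} [Semiring R] {m k : ℕ}
    (A : Fin (k + 2) → Matrix (Fin m) (Fin m) R) (γ : Fin (k + 1) → R) :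
    Matrix (Fin m) (Fin m) R :=
  (List.ofFn fun i : Fin (k + 2) =>
    if (i : ℕ) = 1 then A i
    else γ ⟨(i : ℕ) - 1, by have := i.isLt; omega⟩ • A i).prod

theorem List.prod_ofFn_eq_add {S : Type*} [Semiring S] {n : ℕ} {f g h : Fin n → S} (j : Fin n)
    (hj : f j = g j + h j) (hg : ∀ i, i ≠ j → g i = f i) (hh : ∀ i, i ≠ j → h i = f i) :
    (List.ofFn f).prod = (List.ofFn g).prod + (List.ofFn h).prod := by
  have key := (MultilinearMap.mkPiAlgebraFin ℕ n S).map_update_add f j (g j) (h j)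
  have hf : Function.update f j (g j + h j) = f := by rw [← hj, Function.update_eq_self]
  have hg' : Function.update f j (g j) = g :=
    Function.update_eq_iff.2 ⟨rfl, fun i hi => (hg i hi).symm⟩
  have hh' : Function.update f j (h j) = h :=
    Function.update_eq_iff.2 ⟨rfl, fun i hi => (hh i hi).symm⟩
  simpa only [hf, hg', hh', MultilinearMap.mkPiAlgebraFin_apply] using key

/-- Axiom (A1) for the matrix realization: `μ` is additive in each of its `n` matrix
arguments and additive in each of its `n - 1` parameters. -/
theorem muMat_additive_in_each_argument {R : Type*} [Semiring R] (m k : ℕ)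
    (A : Fin (k + 2) → Matrix (Fin m) (Fin m) R) (γ : Fin (k + 1) → R) :
    (∀ (j : Fin (k + 2)) (A' : Matrix (Fin m) (Fin m) R),
      muMat (Function.update A j (A j + A')) γ =
        muMat A γ + muMat (Function.update A j A') γ) ∧
    (∀ (i : Fin (k + 1)) (γ' : R),
      muMat A (Function.update γ i (γ i + γ')) =
        muMat A γ + muMat A (Function.update γ i γ')) := by
  refine ⟨fun j A' => ?_, fun i γ' => ?_⟩
  · refine List.prod_ofFn_eq_add j ?_ ?_ ?_
    · simp only [Function.update_self]
      split_ifs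
      · rfl
      · exact smul_add _ _ _
    · intro l hl
      simp only [Function.update_of_ne hl]
    · intro l hl
      simp only [Function.update_of_ne hl]
  · -- the parameter `γ i` occurs only in the factor with index `0` if `i = 0`, else `i + 1`
    obtain ⟨j, hj, hji, hne⟩ : ∃ j : Fin (k + 2), (j : ℕ) ≠ 1 ∧ (j : ℕ) - 1 = i ∧
        ∀ l : Fin (k + 2), l ≠ j → (l : ℕ) ≠ 1 → (l : ℕ) - 1 ≠ i := by
      by_cases hi : (i : ℕ) = 0
      · exact ⟨0, by simp, by simp [hi], fun l hl hl1 => by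
          have : (l : ℕ) ≠ 0 := fun h => hl (Fin.ext h)
          omega⟩
      · exact ⟨i.succ, by simpa using hi, by simp, fun l hl hl1 => by
          have : (l : ℕ) ≠ i + 1 := fun h => hl (Fin.ext (by simpa using h))
          omega⟩
    have update_off (x : R) (l : Fin (k + 2)) (hl : l ≠ j) (hl1 : (l : ℕ) ≠ 1) :
        Function.update γ i x ⟨(l : ℕ) - 1, by omega⟩ = γ ⟨(l : ℕ) - 1, by omega⟩ :=
      Function.update_of_ne (fun h => hne l hl hl1 (congrArg Fin.val h)) _ _
    have hi : (⟨(j : ℕ) - 1, by omega⟩ : Fin (k + 1)) = i := Fin.ext hji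
    refine List.prod_ofFn_eq_add j ?_ ?_ ?_
    · simp only [if_neg hj, hi, Function.update_self, add_smul]
    · intro l hl
      split_ifs with hl1
      · rfl
      · rw [update_off _ l hl hl1]
    · intro l hl
      split_ifs with hl1
      · rfl
      · rw [update_off _ l hl hl1, update_off _ l hl hl1]
end

section
/- Axiom (A3) (n-ary associativity / bracket independence) for the matrix realization, in flattened form: for all matrices A₁,…,Aₙ, B₂,…,Bₙ and parameters γ₁,…,γ_{n-1}, δ₁,…,δ_{n-1} in R, (i) first-slot nesting flattens: μ(μ(A₁,…,Aₙ; γ₁,…,γ_{n-1}), B₂,…,Bₙ; δ₁,…,δ_{n-1}) = ((δ₁·γ₁) • A₁) * A₂ * (γ₂ • A₃) * ⋯ * (γ_{n-1} • Aₙ) * B₂ * (δ₂ • B₃) * ⋯ * (δ_{n-1} • Bₙ); and (ii) last-slot nesting flattens: μ(A₁,…,A_{n-1}, μ(B₁,…,Bₙ; δ₁,…,δ_{n-1}); γ₁,…,γ_{n-1}) = (γ₁ • A₁) * A₂ * (γ₂ • A₃) * ⋯ * (γ_{n-2} • A_{n-1}) * ((γ_{n-1}·δ₁) • B₁) * B₂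 * (δ₂ • B₃) * ⋯ * (δ_{n-1} • Bₙ). -/
open Matrix

/-- A scalar acting on `muMat A γ` is absorbed by the first parameter. -/
theorem smul_muMat {R : Type*} [Semiring R] {m k : ℕ} (c : R)
    (A : Fin (k + 2) → Matrix (Fin m) (Fin m) R) (γ : Fin (k + 1) → R) :
    c • muMat A γ =
      (List.ofFn fun i : Fin (k + 2) =>
        if (i : ℕ) = 0 then (c * γ 0) • A i
        else if (i : ℕ) = 1 then A i
        else γ ⟨(i : ℕ) - 1, by have := i.isLt; omega⟩ • A i).prod := by
  unfold muMat
  rw [List.ofFn_succ, List.ofFn_succ, List.prod_cons, List.prod_cons, ← smul_mul_assoc]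
  simp [smul_smul]
  rfl

/-- Axiom (A3) (`n`-ary associativity / bracket independence) for the matrix realization,
in flattened form.

(i) First-slot nesting flattens (`n = k + 2`):
`μ(μ(A₁,…,Aₙ;γ), B₂,…,Bₙ; δ)
  = ((δ₁·γ₁) • A₁) * A₂ * (γ₂ • A₃) * ⋯ * (γ_{n-1} • Aₙ) * B₂ * (δ₂ • B₃) * ⋯ * (δ_{n-1} • Bₙ)`,
where `B j` stands for `B_{j+2}`.

(ii) Last-slot nesting flattens (`n = k + 3`):
`μ(A₁,…,A_{n-1}, μ(B₁,…,Bₙ;δ); γ)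
  = (γ₁ • A₁) * A₂ * (γ₂ • A₃) * ⋯ * (γ_{n-2} • A_{n-1})
      * ((γ_{n-1}·δ₁) • B₁) * B₂ * (δ₂ • B₃) * ⋯ * (δ_{n-1} • Bₙ)`,
where `A j` stands for `A_{j+1}`. -/
theorem muMat_assoc_flatten {R : Type*} [Semiring R] (m : ℕ) :
    (∀ (k : ℕ) (A : Fin (k + 2) → Matrix (Fin m) (Fin m) R)
        (B : Fin (k + 1) → Matrix (Fin m) (Fin m) R) (γ δ : Fin (k + 1) → R),
      muMat (Fin.cons (muMat A γ) B) δ =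
        ((List.ofFn fun i : Fin (k + 2) =>
            if (i : ℕ) = 0 then (δ 0 * γ 0) • A i
            else if (i : ℕ) = 1 then A i
            else γ ⟨(i : ℕ) - 1, by have := i.isLt; omega⟩ • A i) ++
          (List.ofFn fun j : Fin (k + 1) =>
            if (j : ℕ) = 0 then B j else δ j • B j)).prod) ∧
    (∀ (k : ℕ) (A : Fin (k + 2) → Matrix (Fin m) (Fin m) R)
        (B : Fin (k + 3) → Matrix (Fin m) (Fin m) R) (γ δ : Fin (k + 2) → R),
      muMat (Fin.snoc A (muMat B δ)) γ =
        ((List.ofFn fun j : Fin (k + 2) =>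
            if (j : ℕ) = 1 then A j
            else γ ⟨(j : ℕ) - 1, by have := j.isLt; omega⟩ • A j) ++
          (List.ofFn fun i : Fin (k + 3) =>
            if (i : ℕ) = 0 then (γ (Fin.last (k + 1)) * δ 0) • B i
            else if (i : ℕ) = 1 then B i
            else δ ⟨(i : ℕ) - 1, by have := i.isLt; omega⟩ • B i)).prod) := by
  refine ⟨fun k A B γ δ => ?_, fun k A B γ δ => ?_⟩
  · rw [List.prod_append, ← smul_muMat]
    generalize muMat A γ = M
    rw [muMat, List.ofFn_succ, List.prod_cons]
    simp
  · rw [List.prod_append, ← smul_muMat]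
    generalize muMat B δ = M
    rw [muMat, List.ofFn_succ', List.concat_eq_append, List.prod_append, List.prod_singleton]
    simp only [Fin.snoc_castSucc, Fin.snoc_last, Fin.val_castSucc, Fin.val_last]
    rw [if_neg (by omega)]
    rfl
end
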